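/- Let G = N_{3,4}, let f : H → G be a homomorphism from a finite-index subgroup H of G, let m, n, k, j be positive integers with aᵐ, bⁿ, cᵏ, dʲ ∈ H, and let N_f be the associated 4×4 integer exponent matrix. If det(N_f) ≠ 0, then f(aᵐ) ≡ aᵐ, f(bⁿ) ≡ bⁿ, f(cᵏ) ≡ cᵏ, and f(dʲ) ≡ dʲ modulo the commutator subgroup G'; equivalently, N_f is the diagonal matrix diag(m, n, k, j). -/

import Mathlib

/-!
The idea is to compare `f` with the rational Lie algebra of `N_{3,4}`.

Write `x = [a, c]`, `y = [a, d]`, `z = [b, c]`, `w = [b, d]`, `p = [c, d]`, `q = [x, b]`,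
`r = [a, b]`, `s = [y, b]`, `t = [a, y]`. The presentation does not list the relations of class
three, so the centrality of `q, r, t` has to be derived from it: conjugating an element by `g * h`
and by `h * g * [g, h]` gives the same result, and for generators `g, h` both results can be
computed from the relations found so far (`rconj_rconj`). Once `p, q, r, t` are known to be central,
triple commutators of powers of the generators are powers of these elements. Counting exponents
gives seven relations between `aᵐ, bⁿ, cᵏ, dʲ` (`PowerRelations`), for instance
`[aᵐ, bⁿ]^{k²} = [[aᵐ, cᵏ], cᵏ]ⁿ` and `[[aᵐ, dʲ], dʲ] = 1`. They hold in `H`, so their images hold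
for `f(aᵐ), …, f(dʲ)`.

To read off what they say about exponents, `N_{3,4}` is mapped to the Baker–Campbell–Hausdorff
group of a 13-dimensional graded Lie algebra over `ℚ` (`N34Lie.ofN34`). There a relation is a list
of polynomial identities in coordinates, and the degree-one parts of the images of
`f(aᵐ), …, f(dʲ)` are the rows of `Nf`. The degree-two parts of the relations for `[aᵐ, bⁿ]` and
`[cᵏ, dʲ]` say that, for the first two rows and for the last two rows, all `2 × 2` minors other
than those in columns `ab` and `cd` vanish. As the determinant is nonzero, Laplace expansion
leaves two configurations: `Nf` is block diagonal or block antidiagonal. The degree-three parts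
exclude the second one, and in the first one they kill the off-diagonal entries and determine the
diagonal entries to be `m, n, k, j`.
-/

/-- The commutator `[x, y] = x⁻¹ y⁻¹ x y`. -/
def cmt {G : Type*} [Group G] (x y : G) : G := x⁻¹ * y⁻¹ * x * y

/-- The defining relators of the Bludov–Gusev group `N_{3,4}` on generators
`a, b, c, d` (indexed by `0, 1, 2, 3`). -/
def N34Rels : Set (FreeGroup (Fin 4)) :=
  let a : FreeGroup (Fin 4) := FreeGroup.of 0
  let b : FreeGroup (Fin 4) := FreeGroup.of 1
  let c : FreeGroup (Fin 4) := FreeGroup.of 2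
  let d : FreeGroup (Fin 4) := FreeGroup.of 3
  {cmt a (cmt a b), cmt (cmt a b) b, cmt a (cmt c d), cmt (cmt a d) d,
   cmt b (cmt b c), cmt b (cmt c d), cmt c (cmt c d), cmt (cmt c d) d,
   cmt a (cmt b c) * cmt (cmt a c) b,
   cmt a (cmt b d) * cmt (cmt a d) b,
   cmt a (cmt a d) * (cmt (cmt b c) c)⁻¹,
   cmt a (cmt a c) * (cmt b (cmt b d))⁻¹,
   cmt (cmt a c) b * (cmt (cmt b d) d)⁻¹,
   cmt (cmt a c) c * (cmt (cmt b d) c)⁻¹,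
   cmt (cmt a d) b * (cmt (cmt a d) c)⁻¹,
   cmt a b * (cmt (cmt a c) c)⁻¹,
   cmt c d * (cmt a (cmt a c))⁻¹}

/-- The Bludov–Gusev group `N_{3,4}`, presented on generators `a, b, c, d`. -/
abbrev N34 : Type := PresentedGroup N34Rels

/-- The generator `a` of `N_{3,4}`. -/
def ga : N34 := PresentedGroup.of 0
/-- The generator `b` of `N_{3,4}`. -/
def gb : N34 := PresentedGroup.of 1
/-- The generator `c` of `N_{3,4}`. -/
def gc : N34 := PresentedGroup.of 2
/-- The generator `d` of `N_{3,4}`. -/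
def gd : N34 := PresentedGroup.of 3

section Conjugation

variable {G K : Type*} [Group G] [Group K]

/-- Conjugation on the right, `rconj g u = g⁻¹ * u * g`, written `u ^ g` in group theory. It goes
with the convention `[u, g] = u⁻¹ * u ^ g` for commutators. -/
def rconj (g : G) : G →* G := (MulAut.conj g⁻¹).toMonoidHom

theorem rconj_apply (g u : G) : rconj g u = g⁻¹ * u * g := by simp [rconj]

theorem rconj_mul (g h u : G) : rconj (g * h) u = rconj h (rconj g u) := by
  simp only [rconj_apply]; group

@[simp] theorem rconj_eq_self_iff {g u : G} : rconj g u = u ↔ Commute g u := by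
  rw [rconj_apply, mul_assoc, inv_mul_eq_iff_eq_mul, commute_iff_eq, eq_comm]

@[simp] theorem self_eq_rconj_iff {g u : G} : u = rconj g u ↔ Commute g u := by
  rw [eq_comm, rconj_eq_self_iff]

@[simp] theorem rconj_of_commute {g u : G} (h : Commute g u) : rconj g u = u :=
  rconj_eq_self_iff.2 h

@[simp]
theorem rconj_of_commute_symm {g u : G} (h : Commute u g) : rconj g u = u :=
  rconj_of_commute h.symm

@[simp] theorem rconj_inv_rconj (g u : G) : rconj g⁻¹ (rconj g u) = u := by
  rw [← rconj_mul, mul_inv_cancel, rconj_apply, inv_one, one_mul, mul_one]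

theorem rconj_eq_mul_cmt (g u : G) : rconj g u = u * cmt u g := by
  rw [rconj_apply, cmt]; group

theorem cmt_inv (u v : G) : (cmt u v)⁻¹ = cmt v u := by
  simp only [cmt]; group

theorem rconj_eq_mul_inv_cmt (g u : G) : rconj g u = u * (cmt g u)⁻¹ := by
  rw [cmt_inv, rconj_eq_mul_cmt]

theorem map_cmt (φ : G →* K) (u v : G) : φ (cmt u v) = cmt (φ u) (φ v) := by
  simp [cmt]

theorem cmt_eq_one_iff {u v : G} : cmt u v = 1 ↔ Commute u v := by
  rw [← mul_eq_left (a := u), ← rconj_eq_mul_cmt, rconj_eq_self_iff]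
  exact ⟨Commute.symm, Commute.symm⟩

/-- Both sides are `u ^ (g * h)`, because `g * h = h * g * [g, h]`. -/
theorem rconj_rconj (g h u : G) :
    rconj h (rconj g u) = rconj (cmt g h) (rconj g (rconj h u)) := by
  simp only [rconj_apply, cmt]; group

theorem map_rconj (φ : G →* K) (g u : G) : φ (rconj g u) = rconj (φ g) (φ u) := by
  simp [rconj_apply]

theorem rconj_injective (g : G) : Function.Injective (rconj g) := (MulAut.conj g⁻¹).injective

theorem commute_rconj_iff (g : G) {u v : G} : Commute (rconj g u) (rconj g v) ↔ Commute u v :=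
  ⟨fun h => h.of_map (rconj_injective g), fun h => h.map (rconj g)⟩

theorem commute_mul_iff_of_left {u v w : G} (h : Commute u v) :
    Commute u (v * w) ↔ Commute u w :=
  ⟨fun h' => by simpa using h.inv_right.mul_right h', h.mul_right⟩

theorem commute_mul_iff_of_right {u v w : G} (h : Commute u w) :
    Commute u (v * w) ↔ Commute u v :=
  ⟨fun h' => by simpa using h'.mul_right h.inv_right, fun h' => h'.mul_right h⟩

theorem commute_cmt {u g h : G} (hg : Commute u g) (hh : Commute u h) : Commute u (cmt g h) :=
  ((hg.inv_right.mul_right hh.inv_right).mul_right hg).mul_right hh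

end Conjugation

/-! ### Central elements of `N_{3,4}` -/

/-- The defining relations of `N_{3,4}`, imposed on elements `a, b, c, d` of a group. -/
structure N34Relations {K : Type*} [Group K] (a b c d : K) : Prop where
  commute_a_ab : Commute a (cmt a b)
  commute_ab_b : Commute (cmt a b) b
  commute_a_cd : Commute a (cmt c d)
  commute_ad_d : Commute (cmt a d) d
  commute_b_bc : Commute b (cmt b c)
  commute_b_cd : Commute b (cmt c d)
  commute_c_cd : Commute c (cmt c d)
  commute_cd_d : Commute (cmt c d) d
  cmt_a_bc : cmt a (cmt b c) = (cmt (cmt a c) b)⁻¹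
  cmt_a_bd : cmt a (cmt b d) = (cmt (cmt a d) b)⁻¹
  cmt_a_ad : cmt a (cmt a d) = cmt (cmt b c) c
  cmt_a_ac : cmt a (cmt a c) = cmt b (cmt b d)
  cmt_ac_b : cmt (cmt a c) b = cmt (cmt b d) d
  cmt_ac_c : cmt (cmt a c) c = cmt (cmt b d) c
  cmt_ad_b : cmt (cmt a d) b = cmt (cmt a d) c
  cmt_a_b : cmt a b = cmt (cmt a c) c
  cmt_c_d : cmt c d = cmt a (cmt a c)

theorem forall_N34Rels_iff {K : Type*} [Group K] (φ : FreeGroup (Fin 4) →* K) {a b c d : K}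
    (ha : φ (FreeGroup.of 0) = a) (hb : φ (FreeGroup.of 1) = b) (hc : φ (FreeGroup.of 2) = c)
    (hd : φ (FreeGroup.of 3) = d) :
    (∀ u ∈ N34Rels, φ u = 1) ↔ N34Relations a b c d := by
  simp only [N34Rels, Set.mem_insert_iff, Set.mem_singleton_iff, forall_eq_or_imp, forall_eq,
    map_mul, map_inv, map_cmt, ha, hb, hc, hd, mul_eq_one_iff_eq_inv, inv_inv, cmt_eq_one_iff]
  refine ⟨fun h => by constructor <;> tauto, fun h => ?_⟩
  exact ⟨h.commute_a_ab, h.commute_ab_b, h.commute_a_cd, h.commute_ad_d, h.commute_b_bc,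
    h.commute_b_cd, h.commute_c_cd, h.commute_cd_d, h.cmt_a_bc, h.cmt_a_bd, h.cmt_a_ad, h.cmt_a_ac,
    h.cmt_ac_b, h.cmt_ac_c, h.cmt_ad_b, h.cmt_a_b, h.cmt_c_d⟩

namespace N34

theorem relations : N34Relations ga gb gc gd :=
  (forall_N34Rels_iff (PresentedGroup.mk N34Rels) rfl rfl rfl rfl).1
    fun _ => PresentedGroup.one_of_mem

/-- The commutator `[a, c]` of `N_{3,4}`. -/
def x : N34 := cmt ga gc

/-- The commutator `[a, d]` of `N_{3,4}`. -/
def y : N34 := cmt ga gd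

/-- The commutator `[b, c]` of `N_{3,4}`. -/
def z : N34 := cmt gb gc

/-- The commutator `[b, d]` of `N_{3,4}`. -/
def w : N34 := cmt gb gd

/-- The commutator `[c, d]` of `N_{3,4}`. -/
def p : N34 := cmt gc gd

/-- The commutator `[[a, c], b]` of `N_{3,4}`. -/
def q : N34 := cmt x gb

/-- The commutator `[a, b]` of `N_{3,4}`. -/
def r : N34 := cmt ga gb

/-- The commutator `[[a, d], b]` of `N_{3,4}`. -/
def s : N34 := cmt y gb

/-- The commutator `[a, [a, d]]` of `N_{3,4}`. -/
def t : N34 := cmt ga y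

theorem mem_center_of_commute {u : N34} (ha : Commute ga u) (hb : Commute gb u)
    (hc : Commute gc u) (hd : Commute gd u) : u ∈ Subgroup.center N34 := by
  have h : Subgroup.closure (Set.range (PresentedGroup.of (rels := N34Rels))) ≤
      Subgroup.centralizer {u} := by
    rw [Subgroup.closure_le]
    rintro _ ⟨i, rfl⟩
    rw [SetLike.mem_coe, Subgroup.mem_centralizer_singleton_iff]
    fin_cases i
    exacts [ha.eq, hb.eq, hc.eq, hd.eq]
  rw [PresentedGroup.closure_range_of] at h
  exact Subgroup.mem_center_iff.2 fun g =>
    Subgroup.mem_centralizer_singleton_iff.1 (h (Subgroup.mem_top g))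

theorem p_mem_center : p ∈ Subgroup.center N34 :=
  mem_center_of_commute relations.commute_a_cd relations.commute_b_cd relations.commute_c_cd
    relations.commute_cd_d.symm

@[simp] theorem commute_p (u : N34) : Commute u p := Subgroup.mem_center_iff.1 p_mem_center u

@[simp] theorem commute_a_r : Commute ga r := relations.commute_a_ab

@[simp] theorem commute_b_r : Commute gb r := relations.commute_ab_b.symm

@[simp] theorem commute_d_y : Commute gd y := relations.commute_ad_d.symm

@[simp] theorem commute_b_z : Commute gb z := relations.commute_b_bc

@[simp] theorem rconj_b_a : rconj gb ga = ga * r := rconj_eq_mul_cmt _ _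

@[simp] theorem rconj_a_b : rconj ga gb = gb * r⁻¹ := rconj_eq_mul_inv_cmt _ _

@[simp] theorem rconj_c_a : rconj gc ga = ga * x := rconj_eq_mul_cmt _ _

@[simp] theorem rconj_d_a : rconj gd ga = ga * y := rconj_eq_mul_cmt _ _

@[simp] theorem rconj_c_b : rconj gc gb = gb * z := rconj_eq_mul_cmt _ _

@[simp] theorem rconj_d_b : rconj gd gb = gb * w := rconj_eq_mul_cmt _ _

@[simp] theorem rconj_b_d : rconj gb gd = gd * w⁻¹ := rconj_eq_mul_inv_cmt _ _

@[simp] theorem rconj_a_x : rconj ga x = x * p⁻¹ := by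
  rw [rconj_eq_mul_inv_cmt, p, relations.cmt_c_d, x]

@[simp] theorem rconj_b_x : rconj gb x = x * q := by
  rw [rconj_eq_mul_cmt, q]

@[simp] theorem rconj_c_x : rconj gc x = x * r := by
  rw [rconj_eq_mul_cmt, r, relations.cmt_a_b, x]

@[simp] theorem rconj_a_y : rconj ga y = y * t⁻¹ := by
  rw [rconj_eq_mul_inv_cmt, t]

@[simp] theorem rconj_b_y : rconj gb y = y * s := by
  rw [rconj_eq_mul_cmt, s]

@[simp] theorem rconj_c_y : rconj gc y = y * s := by
  rw [rconj_eq_mul_cmt, s, y, relations.cmt_ad_b]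

@[simp] theorem rconj_a_z : rconj ga z = z * q := by
  rw [rconj_eq_mul_inv_cmt, z, relations.cmt_a_bc, inv_inv, q, x]

@[simp] theorem rconj_c_z : rconj gc z = z * t := by
  rw [rconj_eq_mul_cmt, t, y, relations.cmt_a_ad, z]

@[simp] theorem rconj_a_w : rconj ga w = w * s := by
  rw [rconj_eq_mul_inv_cmt, w, relations.cmt_a_bd, inv_inv, s, y]

@[simp] theorem rconj_b_w : rconj gb w = w * p⁻¹ := by
  rw [rconj_eq_mul_inv_cmt, w, ← relations.cmt_a_ac, ← relations.cmt_c_d, p]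

@[simp] theorem rconj_c_w : rconj gc w = w * r := by
  rw [rconj_eq_mul_cmt, w, ← relations.cmt_ac_c, ← relations.cmt_a_b, r]

@[simp] theorem rconj_d_w : rconj gd w = w * q := by
  rw [rconj_eq_mul_cmt, q, x, relations.cmt_ac_b, w]

@[simp] theorem cmt_a_b : cmt ga gb = r := rfl

@[simp] theorem cmt_b_a : cmt gb ga = r⁻¹ := (cmt_inv ga gb).symm

@[simp] theorem cmt_a_c : cmt ga gc = x := rfl

@[simp] theorem cmt_a_d : cmt ga gd = y := rfl

@[simp] theorem cmt_b_c : cmt gb gc = z := rfl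

@[simp] theorem cmt_b_d : cmt gb gd = w := rfl

@[simp] theorem cmt_c_d : cmt gc gd = p := rfl

@[simp] theorem cmt_a_z : cmt ga z = q⁻¹ := relations.cmt_a_bc

theorem inv_p_mul (u : N34) : p⁻¹ * u = u * p⁻¹ := (commute_p u).inv_right.eq.symm

@[simp] theorem commute_x_r : Commute x r := by
  simpa [mul_assoc, inv_p_mul] using rconj_rconj ga gc x

@[simp] theorem commute_q_r : Commute q r :=
  (commute_cmt commute_x_r.symm commute_b_r.symm).symm

@[simp] theorem commute_a_q : Commute ga q := by
  simpa [mul_assoc, inv_p_mul] using rconj_rconj gb ga x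

theorem commute_q_bw : Commute q (gb * w) := by
  have h : q = rconj (gb * w) q := by
    simpa [mul_assoc, inv_p_mul, rconj_mul] using rconj_rconj gb gd w
  exact (self_eq_rconj_iff.1 h).symm

theorem commute_z_wr : Commute z (w * r) := by
  have h : w * r * p⁻¹ = rconj z (w * r) * p⁻¹ := by
    simpa [mul_assoc, inv_p_mul] using rconj_rconj gb gc w
  exact self_eq_rconj_iff.1 (mul_right_cancel h)

@[simp] theorem rconj_d_z : rconj gd z = r * z := by
  simpa [mul_assoc, commute_z_wr.eq] using rconj_rconj gc gd gb

theorem commute_w_rz : Commute w (r * z) := by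
  have h : r * z = rconj w (r * z) := by simpa using rconj_rconj gb gd z
  exact self_eq_rconj_iff.1 h

theorem commute_r_zw : Commute r (z * w) := by
  rw [commute_iff_eq, mul_assoc, commute_z_wr.eq, ← mul_assoc, ← commute_w_rz.eq, mul_assoc]

@[simp] theorem commute_d_s : Commute gd s := by
  simpa using rconj_rconj gc gd y

theorem commute_w_ys : Commute w (y * s) := by
  have h : y * s = rconj w (y * s) := by simpa using rconj_rconj gb gd y
  exact self_eq_rconj_iff.1 h

@[simp] theorem commute_y_w : Commute y w := by
  have h : Commute (rconj gb y) (rconj gb (w * p)) := by simpa using commute_w_ys.symm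
  exact (commute_mul_iff_of_right (commute_p y)).1 ((commute_rconj_iff gb).1 h)

@[simp] theorem commute_s_w : Commute s w :=
  ((commute_mul_iff_of_left commute_y_w.symm).1 commute_w_ys).symm

@[simp] theorem commute_q_s : Commute q s := by
  have h : Commute q (r⁻¹ * (gb * w * s)) := by
    simpa [commute_b_r.symm.inv_left.eq, ← mul_assoc] using commute_q_bw.map (rconj ga)
  exact (commute_mul_iff_of_left commute_q_bw).1
    ((commute_mul_iff_of_left commute_q_r.inv_right).1 h)

theorem commute_q_ys : Commute q (y * s) := by
  have h : Commute (y * s) (w * q) := by simpa using commute_w_ys.symm.map (rconj gd)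
  exact ((commute_mul_iff_of_left commute_w_ys.symm).1 h).symm

@[simp] theorem commute_q_y : Commute q y :=
  (commute_mul_iff_of_right commute_q_s).1 commute_q_ys

@[simp] theorem commute_y_s : Commute y s := by
  simpa [mul_assoc, commute_q_s.eq] using rconj_rconj ga gd w

@[simp] theorem commute_q_t : Commute q t := by
  have h : Commute q (y * t⁻¹) := by simpa using commute_q_y.map (rconj ga)
  simpa using (commute_mul_iff_of_left commute_q_y).1 h

theorem commute_r_ys : Commute r (y * s) := by
  have h : Commute (y * s) (w * r) := by simpa using commute_y_w.map (rconj gc)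
  exact ((commute_mul_iff_of_left commute_w_ys.symm).1 h).symm

@[simp] theorem commute_r_s : Commute r s := by
  have h : Commute r (y * s * rconj gb s) := by simpa using commute_r_ys.map (rconj gb)
  have h' : Commute (rconj gb r) (rconj gb s) := by
    simpa using (commute_mul_iff_of_left commute_r_ys).1 h
  exact (commute_rconj_iff gb).1 h'

@[simp] theorem commute_r_y : Commute r y :=
  (commute_mul_iff_of_right commute_r_s).1 commute_r_ys

@[simp] theorem commute_r_t : Commute r t := by
  have h : Commute r (y * t⁻¹) := by simpa using commute_r_y.map (rconj ga)
  simpa using (commute_mul_iff_of_left commute_r_y).1 h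

theorem rconj_w_a : rconj w ga = ga * s⁻¹ := by
  rw [rconj_eq_mul_cmt, w, relations.cmt_a_bd, s, y]

theorem rconj_d_r : rconj gd r = rconj w r := by
  have hys : Commute (rconj w r) (y * s) := by simpa using commute_r_ys.map (rconj w)
  have h : y * rconj gd r = s⁻¹ * (rconj w r * (y * s)) := by
    simpa [mul_assoc, rconj_w_a] using rconj_rconj gb gd ga
  rwa [hys.eq, commute_y_s.eq, mul_assoc, inv_mul_cancel_left, mul_right_inj] at h

@[simp] theorem commute_r_w : Commute r w := by
  have h := congrArg (rconj gb) rconj_d_r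
  rw [map_rconj, map_rconj (rconj gb) w] at h
  have h' : r = rconj w r := by simpa [rconj_mul, rconj_d_r] using h
  exact (self_eq_rconj_iff.1 h').symm

@[simp] theorem commute_d_r : Commute gd r := by
  rw [← rconj_eq_self_iff, rconj_d_r]
  simp

@[simp] theorem commute_r_z : Commute r z :=
  (commute_mul_iff_of_right commute_r_w).1 commute_r_zw

@[simp] theorem commute_b_s : Commute gb s := by
  simpa [mul_assoc, inv_p_mul] using rconj_rconj ga gb w

@[simp] theorem commute_b_q : Commute gb q := by
  simpa using rconj_rconj ga gb z

@[simp] theorem commute_q_w : Commute q w :=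
  (commute_mul_iff_of_left commute_b_q.symm).1 commute_q_bw

@[simp] theorem commute_c_q : Commute gc q := by
  simpa [mul_assoc, commute_q_r.eq] using rconj_rconj gc gd w

@[simp] theorem commute_q_z : Commute q z := commute_cmt commute_b_q.symm commute_c_q.symm

@[simp] theorem commute_q_x : Commute q x := commute_cmt commute_a_q.symm commute_c_q.symm

@[simp] theorem commute_x_z : Commute x z := by
  have h : Commute z x := by simpa [mul_assoc, commute_q_r.eq] using rconj_rconj gb gc x
  exact h.symm

theorem rconj_z_a : rconj z ga = ga * q⁻¹ := by
  rw [rconj_eq_mul_cmt, cmt_a_z]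

@[simp] theorem commute_c_r : Commute gc r := by
  have h : x * rconj gc r = q⁻¹ * (r * x * q) := by
    simpa [mul_assoc, rconj_z_a] using rconj_rconj gb gc ga
  rwa [← (commute_q_r.mul_right commute_q_x).eq, inv_mul_cancel_left, ← commute_x_r.eq,
    mul_right_inj, rconj_eq_self_iff] at h

theorem commute_t_ax : Commute t (ga * x) := by
  have h : t = rconj (ga * x) t := by
    simpa [mul_assoc, ← commute_q_t.eq, rconj_mul] using rconj_rconj ga gc z
  exact (self_eq_rconj_iff.1 h).symm

theorem commute_t_bz : Commute t (gb * z) := by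
  have h : t = rconj (gb * z) t := by simpa [rconj_mul] using rconj_rconj gb gc z
  exact (self_eq_rconj_iff.1 h).symm

@[simp] theorem commute_d_t : Commute gd t := by
  simpa [mul_assoc] using rconj_rconj gc gd z

@[simp] theorem commute_y_t : Commute y t := by
  simpa [mul_assoc] using rconj_rconj ga gd y

@[simp] theorem rconj_d_x : rconj gd x = y⁻¹ * x * y * s := by
  simpa [mul_assoc, eq_inv_mul_iff_mul_eq] using rconj_rconj gc gd ga

@[simp] theorem commute_rconj_d_q_y : Commute (rconj gd q) y := by
  simpa using commute_q_y.map (rconj gd)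

@[simp] theorem commute_rconj_d_q_s : Commute (rconj gd q) s := by
  simpa using commute_q_s.map (rconj gd)

@[simp] theorem commute_rconj_d_q_r : Commute (rconj gd q) r := by
  simpa using commute_q_r.map (rconj gd)

@[simp] theorem commute_rconj_d_q_a : Commute (rconj gd q) ga := by
  have h : Commute (rconj gd q) (ga * y) := by simpa using commute_a_q.symm.map (rconj gd)
  exact (commute_mul_iff_of_right commute_rconj_d_q_y).1 h

@[simp] theorem commute_rconj_d_q_z : Commute (rconj gd q) z := by
  have h : Commute (rconj gd q) (r * z) := by simpa using commute_q_z.map (rconj gd)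
  exact (commute_mul_iff_of_left commute_rconj_d_q_r).1 h

@[simp] theorem commute_rconj_d_q_c : Commute (rconj gd q) gc := by
  have h : Commute gc (rconj gd q) := by simpa using rconj_rconj gc gd q
  exact h.symm

@[simp] theorem commute_rconj_d_q_q : Commute (rconj gd q) q := by
  rw [← Commute.inv_right_iff, ← cmt_a_z]
  exact commute_cmt commute_rconj_d_q_a commute_rconj_d_q_z

@[simp] theorem commute_rconj_d_q_w : Commute (rconj gd q) w := by
  have h : Commute (rconj gd q) (w * q) := by simpa using commute_q_w.map (rconj gd)
  exact (commute_mul_iff_of_right commute_rconj_d_q_q).1 h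

@[simp] theorem commute_rconj_d_q_b : Commute (rconj gd q) gb := by
  have h : Commute (rconj gd q) (gb * w) := by simpa using commute_b_q.symm.map (rconj gd)
  exact (commute_mul_iff_of_right commute_rconj_d_q_w).1 h

@[simp] theorem commute_rconj_d_q_t : Commute (rconj gd q) t := by
  rw [t, y, relations.cmt_a_ad]
  exact commute_cmt commute_rconj_d_q_z commute_rconj_d_q_c

theorem rconj_y_z : rconj y z = z * (rconj gd q * q⁻¹) := by
  have h : z * rconj gd q = rconj y z * q := by simpa [mul_assoc] using rconj_rconj ga gd z
  rw [← mul_assoc, h, mul_inv_cancel_right]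

theorem rconj_z_y : rconj z y = y * (q * (rconj gd q)⁻¹) := by
  have h : cmt z y = rconj gd q * q⁻¹ := by
    rw [← mul_right_inj z, ← rconj_eq_mul_cmt, rconj_y_z]
  rw [rconj_eq_mul_inv_cmt, h, mul_inv_rev, inv_inv]

theorem commute_s_q_mul_inv_rconj_d_q : Commute s (q * (rconj gd q)⁻¹) :=
  commute_q_s.symm.mul_right commute_rconj_d_q_s.symm.inv_right

theorem commute_t_q_mul_inv_rconj_d_q : Commute t (q * (rconj gd q)⁻¹) :=
  commute_q_t.symm.mul_right commute_rconj_d_q_t.symm.inv_right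

@[simp] theorem commute_z_s : Commute z s := by
  have h := congrArg (rconj z) rconj_b_y
  rw [map_rconj] at h
  have h' : s * (q * (rconj gd q)⁻¹) = q * (rconj gd q)⁻¹ * rconj z s := by
    simpa [rconj_z_y, mul_assoc] using h
  rwa [commute_s_q_mul_inv_rconj_d_q.eq, mul_right_inj, self_eq_rconj_iff] at h'

theorem rconj_c_s : rconj gc s = s * (q * (rconj gd q)⁻¹) := by
  have h : s * rconj gc s = q * (rconj gd q)⁻¹ * s * s := by
    simpa [mul_assoc, rconj_z_y] using rconj_rconj gb gc y
  rwa [← commute_s_q_mul_inv_rconj_d_q.eq, mul_assoc, ← commute_s_q_mul_inv_rconj_d_q.eq,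
    mul_right_inj] at h

@[simp] theorem commute_s_t : Commute s t := by
  have hz : Commute (s * (q * (rconj gd q)⁻¹)) z :=
    commute_z_s.symm.mul_left (commute_q_z.mul_left commute_rconj_d_q_z.inv_left)
  have h : Commute (z * t) (s * (q * (rconj gd q)⁻¹)) := by
    simpa [rconj_c_s] using commute_z_s.map (rconj gc)
  have h' := (commute_mul_iff_of_left hz).1 h.symm
  exact ((commute_mul_iff_of_right commute_t_q_mul_inv_rconj_d_q).1 h'.symm).symm

@[simp] theorem commute_z_t : Commute z t := by
  have h : q * (rconj gd q)⁻¹ * (rconj z t)⁻¹ = t⁻¹ * (q * (rconj gd q)⁻¹) := by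
    simpa [rconj_z_y, mul_assoc] using rconj_rconj ga z y
  rwa [commute_t_q_mul_inv_rconj_d_q.inv_left.eq, mul_right_inj, inv_inj, rconj_eq_self_iff] at h

@[simp] theorem commute_b_t : Commute gb t :=
  ((commute_mul_iff_of_right commute_z_t.symm).1 commute_t_bz).symm

@[simp] theorem commute_a_s : Commute ga s := by
  simpa [mul_assoc, commute_s_t.inv_right.eq] using rconj_rconj gb ga y

@[simp] theorem commute_rconj_d_q_x : Commute (rconj gd q) x :=
  commute_cmt commute_rconj_d_q_a commute_rconj_d_q_c

@[simp] theorem commute_x_s : Commute x s := by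
  simpa [rconj_c_s] using rconj_rconj ga gc s

@[simp] theorem commute_c_s : Commute gc s := by
  have hs : Commute s (y⁻¹ * x * (r * y)) :=
    (commute_y_s.symm.inv_right.mul_right commute_x_s.symm).mul_right
      (commute_r_s.symm.mul_right commute_y_s.symm)
  have h : y⁻¹ * x * (y * r) * s = s⁻¹ * (y⁻¹ * x * (r * y) * s) * rconj gc s := by
    simpa [mul_assoc, commute_r_s.eq] using rconj_rconj gc gd x
  rwa [← hs.eq, inv_mul_cancel_left, commute_r_y.eq, mul_right_inj, self_eq_rconj_iff] at h

@[simp] theorem commute_d_q : Commute gd q := by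
  have h : q * (rconj gd q)⁻¹ = 1 := by simpa using rconj_c_s
  rwa [mul_inv_eq_one, self_eq_rconj_iff] at h

theorem commute_x_y_mul_inv_t : Commute x (y * t⁻¹) := by
  have h : rconj y x * (s * p⁻¹) = rconj (y * t⁻¹) (rconj y x) * (s * p⁻¹) := by
    simpa [mul_assoc, inv_p_mul, rconj_apply y x, rconj_apply (y * t⁻¹)] using rconj_rconj ga gd x
  have h' : Commute (rconj y x) (rconj y (y * t⁻¹)) := by
    simpa using (self_eq_rconj_iff.1 (mul_right_cancel h)).symm
  exact (commute_rconj_iff y).1 h'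

@[simp] theorem commute_x_y : Commute x y := by
  have h : Commute (rconj ga (x * p)) (rconj ga y) := by
    simpa using commute_x_y_mul_inv_t
  exact ((commute_mul_iff_of_right (commute_p y)).1 ((commute_rconj_iff ga).1 h).symm).symm

@[simp] theorem commute_t_x : Commute t x := by
  simpa using ((commute_mul_iff_of_left commute_x_y).1 commute_x_y_mul_inv_t).symm

@[simp] theorem commute_a_t : Commute ga t :=
  ((commute_mul_iff_of_right commute_t_x).1 commute_t_ax).symm

@[simp] theorem commute_c_t : Commute gc t := by
  have h : s * (rconj gc t)⁻¹ = t⁻¹ * s := by simpa [mul_assoc] using rconj_rconj ga gc y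
  rwa [← commute_s_t.inv_right.eq, mul_right_inj, inv_inj, rconj_eq_self_iff] at h

theorem q_mem_center : q ∈ Subgroup.center N34 :=
  mem_center_of_commute commute_a_q commute_b_q commute_c_q commute_d_q

theorem r_mem_center : r ∈ Subgroup.center N34 :=
  mem_center_of_commute commute_a_r commute_b_r commute_c_r commute_d_r

theorem t_mem_center : t ∈ Subgroup.center N34 :=
  mem_center_of_commute commute_a_t commute_b_t commute_c_t commute_d_t

end N34

/-! ### Relations between powers of the generators -/

section Powers

variable {G : Type*} [Group G]

theorem cmt_pow_left {u v : G} (h : Commute u (cmt u v)) (m : ℕ) :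
    cmt (u ^ m) v = cmt u v ^ m := by
  rw [← mul_right_inj (u ^ m), ← rconj_eq_mul_cmt, map_pow, rconj_eq_mul_cmt, h.mul_pow]

theorem cmt_pow_right {u v : G} (h : Commute v (cmt u v)) (n : ℕ) :
    cmt u (v ^ n) = cmt u v ^ n := by
  rw [← cmt_inv v u] at h ⊢
  rw [← cmt_inv, cmt_pow_left (Commute.inv_right_iff.1 h), inv_pow]

theorem cmt_pow_pow {u v : G} (hu : Commute u (cmt u v)) (hv : Commute v (cmt u v)) (m n : ℕ) :
    cmt (u ^ m) (v ^ n) = cmt u v ^ (m * n) := by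
  have h : cmt (u ^ m) v = cmt u v ^ m := cmt_pow_left hu m
  rw [cmt_pow_right (h ▸ hv.pow_right m), h, pow_mul]

theorem exists_mem_center_cmt_pow_pow {u v : G} (hu : cmt u (cmt u v) ∈ Subgroup.center G)
    (hv : cmt (cmt u v) v ∈ Subgroup.center G) (m n : ℕ) :
    ∃ ζ ∈ Subgroup.center G, cmt (u ^ m) (v ^ n) = cmt u v ^ (m * n) * ζ := by
  let π := QuotientGroup.mk' (Subgroup.center G)
  have hπ : ∀ g ∈ Subgroup.center G, π g = 1 := fun g hg => (QuotientGroup.eq_one_iff g).2 hg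
  have hu' : Commute (π u) (cmt (π u) (π v)) := by
    rw [← cmt_eq_one_iff, ← map_cmt, ← map_cmt, hπ _ hu]
  have hv' : Commute (cmt (π u) (π v)) (π v) := by
    rw [← cmt_eq_one_iff, ← map_cmt, ← map_cmt, hπ _ hv]
  have h : π (cmt u v ^ (m * n)) = π (cmt (u ^ m) (v ^ n)) := by
    simpa only [map_pow, map_cmt] using (cmt_pow_pow hu' hv'.symm m n).symm
  exact ⟨_, QuotientGroup.eq.1 h, (mul_inv_cancel_left _ _).symm⟩

theorem cmt_mul_left_of_mem_center {ζ : G} (hζ : ζ ∈ Subgroup.center G) (u v : G) :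
    cmt (u * ζ) v = cmt u v := by
  have hcomm : ∀ g, Commute g ζ := Subgroup.mem_center_iff.1 hζ
  rw [← mul_right_inj (u * ζ), ← rconj_eq_mul_cmt, map_mul, rconj_of_commute (hcomm v),
    rconj_eq_mul_cmt, mul_assoc, (hcomm _).eq, ← mul_assoc]

theorem cmt_pow_mul_pow_of_mem_center {u v ζ : G} (h : cmt u v ∈ Subgroup.center G)
    (hζ : ζ ∈ Subgroup.center G) (m n : ℕ) : cmt (u ^ m * ζ) (v ^ n) = cmt u v ^ (m * n) := by
  rw [cmt_mul_left_of_mem_center hζ]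
  exact cmt_pow_pow (Subgroup.mem_center_iff.1 h u) (Subgroup.mem_center_iff.1 h v) m n

theorem cmt_pow_pow_mul_of_mem_center {u v ζ : G} (h : cmt u v ∈ Subgroup.center G)
    (hζ : ζ ∈ Subgroup.center G) (m n : ℕ) : cmt (u ^ m) (v ^ n * ζ) = cmt u v ^ (m * n) := by
  rw [← cmt_inv, cmt_pow_mul_pow_of_mem_center (by simpa only [cmt_inv] using inv_mem h) hζ,
    ← cmt_inv u v, inv_pow, inv_inv, mul_comm]

end Powers

/-- Relations between `A, B, C, D` which hold for `aᵐ, bⁿ, cᵏ, dʲ` in `N_{3,4}` because every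
commutator involved is then a power of a central element. The exponents balance the degrees of the
two sides in `m, n, k, j`. -/
structure PowerRelations {G : Type*} [Group G] (A B C D : G) (m n k j : ℕ) : Prop where
  ab_eq_acc : cmt A B ^ (k * k) = cmt (cmt A C) C ^ n
  cd_eq_aac : cmt C D ^ (m * m) = cmt A (cmt A C) ^ j
  add_eq_one : cmt (cmt A D) D = 1
  bbc_eq_one : cmt B (cmt B C) = 1
  acc_eq_bdc : cmt (cmt A C) C ^ (n * j) = cmt (cmt B D) C ^ (m * k)
  aac_eq_bbd : cmt A (cmt A C) ^ (n * n * j) = cmt B (cmt B D) ^ (m * m * k)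
  aad_eq_bcc : cmt A (cmt A D) ^ (n * k * k) = cmt (cmt B C) C ^ (m * m * j)

namespace PowerRelations

variable {G K : Type*} [Group G] [Group K] {A B C D : G} {m n k j : ℕ}

theorem map (h : PowerRelations A B C D m n k j) (φ : G →* K) :
    PowerRelations (φ A) (φ B) (φ C) (φ D) m n k j := by
  constructor <;> simp only [← map_cmt, ← map_pow]
  exacts [congrArg φ h.ab_eq_acc, congrArg φ h.cd_eq_aac, by rw [h.add_eq_one, map_one],
    by rw [h.bbc_eq_one, map_one], congrArg φ h.acc_eq_bdc, congrArg φ h.aac_eq_bbd,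
    congrArg φ h.aad_eq_bcc]

theorem of_map {φ : G →* K} (hφ : Function.Injective φ)
    (h : PowerRelations (φ A) (φ B) (φ C) (φ D) m n k j) : PowerRelations A B C D m n k j := by
  constructor <;> apply hφ <;> simp only [map_cmt, map_pow, map_one]
  exacts [h.ab_eq_acc, h.cd_eq_aac, h.add_eq_one, h.bbc_eq_one, h.acc_eq_bdc, h.aac_eq_bbd,
    h.aad_eq_bcc]

end PowerRelations

namespace N34

theorem cmt_a_x : cmt ga x = p := by rw [x, p, relations.cmt_c_d]

theorem cmt_x_c : cmt x gc = r := by rw [x, r, relations.cmt_a_b]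

theorem cmt_a_y : cmt ga y = t := rfl

theorem cmt_y_d : cmt y gd = 1 := cmt_eq_one_iff.2 commute_d_y.symm

theorem cmt_b_z : cmt gb z = 1 := cmt_eq_one_iff.2 commute_b_z

theorem cmt_z_c : cmt z gc = t := relations.cmt_a_ad.symm

theorem cmt_b_w : cmt gb w = p := by rw [w, ← relations.cmt_a_ac, p, relations.cmt_c_d]

theorem cmt_w_c : cmt w gc = r := by rw [w, ← relations.cmt_ac_c, r, relations.cmt_a_b]

theorem cmt_w_d : cmt w gd = q := relations.cmt_ac_b.symm

theorem powerRelations (m n k j : ℕ) :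
    PowerRelations (ga ^ m) (gb ^ n) (gc ^ k) (gd ^ j) m n k j := by
  have hp := p_mem_center
  have hq := q_mem_center
  have hr := r_mem_center
  have ht := t_mem_center
  have h1 := one_mem (Subgroup.center N34)
  obtain ⟨ζ₁, hζ₁, hx⟩ : ∃ ζ ∈ Subgroup.center N34, cmt (ga ^ m) (gc ^ k) = x ^ (m * k) * ζ :=
    exists_mem_center_cmt_pow_pow (by rwa [cmt_a_c, cmt_a_x]) (by rwa [cmt_a_c, cmt_x_c]) m k
  obtain ⟨ζ₂, hζ₂, hy⟩ : ∃ ζ ∈ Subgroup.center N34, cmt (ga ^ m) (gd ^ j) = y ^ (m * j) * ζ :=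
    exists_mem_center_cmt_pow_pow (by rwa [cmt_a_d, cmt_a_y]) (by rwa [cmt_a_d, cmt_y_d]) m j
  obtain ⟨ζ₃, hζ₃, hz⟩ : ∃ ζ ∈ Subgroup.center N34, cmt (gb ^ n) (gc ^ k) = z ^ (n * k) * ζ :=
    exists_mem_center_cmt_pow_pow (by rwa [cmt_b_c, cmt_b_z]) (by rwa [cmt_b_c, cmt_z_c]) n k
  obtain ⟨ζ₄, hζ₄, hw⟩ : ∃ ζ ∈ Subgroup.center N34, cmt (gb ^ n) (gd ^ j) = w ^ (n * j) * ζ :=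
    exists_mem_center_cmt_pow_pow (by rwa [cmt_b_d, cmt_b_w]) (by rwa [cmt_b_d, cmt_w_d]) n j
  have hab : cmt (ga ^ m) (gb ^ n) = r ^ (m * n) :=
    cmt_pow_pow commute_a_r commute_b_r m n
  have hcd : cmt (gc ^ k) (gd ^ j) = p ^ (k * j) :=
    cmt_pow_pow (commute_p gc) (commute_p gd) k j
  constructor <;> simp only [hab, hcd, hx, hy, hz, hw]
  · rw [cmt_pow_mul_pow_of_mem_center (by rwa [cmt_x_c]) hζ₁, cmt_x_c]
    simp only [← pow_mul]
    ring_nf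
  · rw [cmt_pow_pow_mul_of_mem_center (by rwa [cmt_a_x]) hζ₁, cmt_a_x]
    simp only [← pow_mul]
    ring_nf
  · rw [cmt_pow_mul_pow_of_mem_center (by rwa [cmt_y_d]) hζ₂, cmt_y_d, one_pow]
  · rw [cmt_pow_pow_mul_of_mem_center (by rwa [cmt_b_z]) hζ₃, cmt_b_z, one_pow]
  · rw [cmt_pow_mul_pow_of_mem_center (by rwa [cmt_x_c]) hζ₁, cmt_x_c,
      cmt_pow_mul_pow_of_mem_center (by rwa [cmt_w_c]) hζ₄, cmt_w_c]
    simp only [← pow_mul]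
    ring_nf
  · rw [cmt_pow_pow_mul_of_mem_center (by rwa [cmt_a_x]) hζ₁, cmt_a_x,
      cmt_pow_pow_mul_of_mem_center (by rwa [cmt_b_w]) hζ₄, cmt_b_w]
    simp only [← pow_mul]
    ring_nf
  · rw [cmt_pow_pow_mul_of_mem_center (by rwa [cmt_a_y]) hζ₂, cmt_a_y,
      cmt_pow_mul_pow_of_mem_center (by rwa [cmt_z_c]) hζ₃, cmt_z_c]
    simp only [← pow_mul]
    ring_nf

end N34

/-! ### The Baker–Campbell–Hausdorff group -/

section BakerCampbellHausdorff

/-- Lie rings of nilpotency class at most three. -/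
class IsThreeStepNilpotent (L : Type*) [LieRing L] : Prop where
  lie_lie_lie_eq_zero (X Y Z W : L) : ⁅X, ⁅Y, ⁅Z, W⁆⁆⁆ = 0

namespace IsThreeStepNilpotent

variable {L : Type*} [LieRing L] [IsThreeStepNilpotent L] (X Y Z W : L)

theorem lie_lie_lie_left_eq_zero : ⁅X, ⁅⁅Y, Z⁆, W⁆⁆ = 0 := by
  rw [← lie_skew ⁅Y, Z⁆ W, lie_neg, lie_lie_lie_eq_zero, neg_zero]

theorem lie_lie_left_lie_left_eq_zero : ⁅⁅⁅X, Y⁆, Z⁆, W⁆ = 0 := by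
  rw [← lie_skew, lie_lie_lie_left_eq_zero, neg_zero]

end IsThreeStepNilpotent

/-- The group that the Baker–Campbell–Hausdorff formula attaches to a nilpotent Lie algebra `L`
over `ℚ`: its elements are the formal exponentials of elements of `L`. -/
@[ext]
structure BCH (L : Type*) where
  /-- The formal exponential of an element of the Lie algebra. -/
  exp ::
  /-- The formal logarithm. -/
  log : L

namespace BCH

open IsThreeStepNilpotent

variable {L : Type*} [LieRing L]

instance : One (BCH L) := ⟨exp 0⟩

instance : Inv (BCH L) := ⟨fun g => exp (-g.log)⟩

@[simp] theorem log_one : (1 : BCH L).log = 0 := rfl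

@[simp] theorem log_inv (g : BCH L) : g⁻¹.log = -g.log := rfl

variable [LieAlgebra ℚ L]

/-- The terms of degree at most three of the Baker–Campbell–Hausdorff series. -/
instance : Mul (BCH L) where
  mul g h := exp (g.log + h.log + (1 / 2 : ℚ) • ⁅g.log, h.log⁆ +
    (1 / 12 : ℚ) • ⁅g.log - h.log, ⁅g.log, h.log⁆⁆)

theorem log_mul (g h : BCH L) : (g * h).log = g.log + h.log + (1 / 2 : ℚ) • ⁅g.log, h.log⁆ +
    (1 / 12 : ℚ) • ⁅g.log - h.log, ⁅g.log, h.log⁆⁆ := rfl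

theorem log_mul_of_lie_eq_zero {g h : BCH L} (hgh : ⁅g.log, h.log⁆ = 0) :
    (g * h).log = g.log + h.log := by
  simp [log_mul, hgh]

variable [IsThreeStepNilpotent L]

instance : Group (BCH L) := Group.ofLeftAxioms
  (fun g h k => by
    ext
    obtain ⟨X⟩ := g
    obtain ⟨Y⟩ := h
    obtain ⟨Z⟩ := k
    have jac : ⁅X, ⁅Y, Z⁆⁆ = ⁅Y, ⁅X, Z⁆⁆ - ⁅Z, ⁅X, Y⁆⁆ := by
      rw [leibniz_lie, ← lie_skew _ Z, neg_add_eq_sub]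
    simp only [log_mul, lie_add, add_lie, lie_sub, sub_lie, lie_smul, smul_lie, lie_lie,
      lie_lie_lie_eq_zero, lie_zero, jac]
    module)
  (fun g => BCH.ext (by simp [log_mul]))
  (fun g => BCH.ext (by simp [log_mul]))

theorem log_cmt (g h : BCH L) :
    (cmt g h).log = ⁅g.log, h.log⁆ + (1 / 2 : ℚ) • ⁅⁅g.log, h.log⁆, g.log + h.log⁆ := by
  obtain ⟨X⟩ := g
  obtain ⟨Y⟩ := h
  have hyx : ⁅Y, X⁆ = -⁅X, Y⁆ := (lie_skew Y X).symm
  simp only [cmt, log_mul, log_inv, lie_add, add_lie, lie_sub, sub_lie, lie_smul, smul_lie, lie_lie,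
    lie_lie_lie_eq_zero, lie_self, lie_zero, zero_lie, hyx, lie_neg, neg_lie]
  module

theorem log_cmt_cmt_left (g h k : BCH L) :
    (cmt (cmt g h) k).log = ⁅⁅g.log, h.log⁆, k.log⁆ := by
  simp only [log_cmt, lie_add, add_lie, smul_lie, lie_lie_left_lie_left_eq_zero,
    smul_zero, add_zero]

theorem log_cmt_cmt_right (g h k : BCH L) :
    (cmt g (cmt h k)).log = ⁅g.log, ⁅h.log, k.log⁆⁆ := by
  rw [← cmt_inv, log_inv, log_cmt_cmt_left, lie_skew]

@[simp] theorem log_pow (g : BCH L) (i : ℕ) : (g ^ i).log = i • g.log := by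
  induction i with
  | zero => simp
  | succ i ih => rw [pow_succ, log_mul_of_lie_eq_zero (by simp [ih]), ih, succ_nsmul]

/-- The homomorphism induced on `BCH L` by a linear map that kills all brackets. -/
def linearPart {V : Type*} [AddCommGroup V] [Module ℚ V] (ℓ : L →ₗ[ℚ] V)
    (hℓ : ∀ X Y : L, ℓ ⁅X, Y⁆ = 0) : BCH L →* Multiplicative V where
  toFun g := Multiplicative.ofAdd (ℓ g.log)
  map_one' := by simp
  map_mul' g h := by simp [log_mul, hℓ]

end BCH

end BakerCampbellHausdorff

/-! ### The rational Lie algebra of `N_{3,4}` -/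

/-- Indices of a basis of `N34Lie`, named after elements of `N_{3,4}`: its generators `a, b, c, d`
and the commutators `N34.x, …, N34.t`. -/
inductive N34Index
  | a | b | c | d | x | y | z | w | p | q | r | s | t
  deriving DecidableEq

/-- The rational Lie algebra of `N_{3,4}`. Its elements are coordinate vectors with respect to a
basis whose nonzero brackets are `[a, c] = x`, `[a, d] = y`, `[b, c] = z`, `[b, d] = w`,
`[a, b] = [x, c] = [w, c] = [z, d] = r`, `[c, d] = [a, x] = [b, w] = p`,
`[x, b] = [z, a] = [w, d] = q`, `[y, b] = [y, c] = [x, d] = [w, a] = s` and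
`[a, y] = [z, c] = t`, up to antisymmetry. -/
def N34Lie : Type := N34Index → ℚ

namespace N34Lie

open N34Index

instance : AddCommGroup N34Lie := inferInstanceAs (AddCommGroup (N34Index → ℚ))

instance : Module ℚ N34Lie := inferInstanceAs (Module ℚ (N34Index → ℚ))

instance : FunLike N34Lie N34Index ℚ := ⟨fun X => X, fun _ _ => id⟩

@[simp] theorem zero_apply (i : N34Index) : (0 : N34Lie) i = 0 := rfl

@[simp] theorem add_apply (X Y : N34Lie) (i : N34Index) : (X + Y) i = X i + Y i := rfl

@[simp] theorem smul_apply (c : ℚ) (X : N34Lie) (i : N34Index) : (c • X) i = c * X i := rfl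

@[simp] theorem nsmul_apply (n : ℕ) (X : N34Lie) (i : N34Index) : (n • X) i = n * X i :=
  nsmul_eq_mul n (X i : ℚ)

@[ext] theorem ext {X Y : N34Lie} (h : ∀ i, X i = Y i) : X = Y := DFunLike.ext X Y h

instance : Bracket N34Lie N34Lie where
  bracket X Y
    | a | b | c | d => 0
    | x => X a * Y c - X c * Y a
    | y => X a * Y d - X d * Y a
    | z => X b * Y c - X c * Y b
    | w => X b * Y d - X d * Y b
    | p => X c * Y d - X d * Y c + X a * Y x - X x * Y a + X b * Y w - X w * Y b
    | q => X x * Y b - X b * Y x + X z * Y a - X a * Y z + X w * Y d - X d * Y w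
    | r => X a * Y b - X b * Y a + X x * Y c - X c * Y x + X w * Y c - X c * Y w +
        X z * Y d - X d * Y z
    | s => X y * Y b - X b * Y y + X y * Y c - X c * Y y + X x * Y d - X d * Y x +
        X w * Y a - X a * Y w
    | t => X a * Y y - X y * Y a + X z * Y c - X c * Y z

section Coordinates

variable (X Y : N34Lie)

@[simp] theorem lie_a : ⁅X, Y⁆ a = 0 := rfl

@[simp] theorem lie_b : ⁅X, Y⁆ b = 0 := rfl

@[simp] theorem lie_c : ⁅X, Y⁆ c = 0 := rfl

@[simp] theorem lie_d : ⁅X, Y⁆ d = 0 := rfl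

@[simp] theorem lie_x : ⁅X, Y⁆ x = X a * Y c - X c * Y a := rfl

@[simp] theorem lie_y : ⁅X, Y⁆ y = X a * Y d - X d * Y a := rfl

@[simp] theorem lie_z : ⁅X, Y⁆ z = X b * Y c - X c * Y b := rfl

@[simp] theorem lie_w : ⁅X, Y⁆ w = X b * Y d - X d * Y b := rfl

@[simp] theorem lie_p : ⁅X, Y⁆ p =
    X c * Y d - X d * Y c + X a * Y x - X x * Y a + X b * Y w - X w * Y b := rfl

@[simp] theorem lie_q : ⁅X, Y⁆ q =
    X x * Y b - X b * Y x + X z * Y a - X a * Y z + X w * Y d - X d * Y w := rfl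

@[simp] theorem lie_r : ⁅X, Y⁆ r = X a * Y b - X b * Y a + X x * Y c - X c * Y x +
    X w * Y c - X c * Y w + X z * Y d - X d * Y z := rfl

@[simp] theorem lie_s : ⁅X, Y⁆ s = X y * Y b - X b * Y y + X y * Y c - X c * Y y +
    X x * Y d - X d * Y x + X w * Y a - X a * Y w := rfl

@[simp] theorem lie_t : ⁅X, Y⁆ t = X a * Y y - X y * Y a + X z * Y c - X c * Y z := rfl

end Coordinates

instance : LieRing N34Lie where
  add_lie X Y Z := by ext i; cases i <;> simp <;> ring
  lie_add X Y Z := by ext i; cases i <;> simp <;> ring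
  lie_self X := by ext i; cases i <;> simp <;> ring
  leibniz_lie X Y Z := by ext i; cases i <;> simp <;> ring

instance : LieAlgebra ℚ N34Lie where
  lie_smul c X Y := by ext i; cases i <;> simp <;> ring

instance : IsThreeStepNilpotent N34Lie where
  lie_lie_lie_eq_zero X Y Z W := by ext i; cases i <;> simp

/-- The element of the basis of `N34Lie` with a given index. -/
def basis (i : N34Index) : N34Lie := Pi.single i 1

theorem basis_apply (i j : N34Index) : basis i j = if j = i then 1 else 0 :=
  Pi.single_apply i 1 j

/-- The coordinates of degree one, which are those with respect to `a, b, c, d`. -/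
def degreeOne : N34Lie →ₗ[ℚ] Fin 4 → ℚ where
  toFun X := ![X a, X b, X c, X d]
  map_add' X Y := by ext i; fin_cases i <;> rfl
  map_smul' c X := by ext i; fin_cases i <;> rfl

theorem degreeOne_lie (X Y : N34Lie) : degreeOne ⁅X, Y⁆ = 0 := by
  ext i; fin_cases i <;> rfl

theorem n34Relations : N34Relations (BCH.exp (basis a)) (BCH.exp (basis b)) (BCH.exp (basis c))
    (BCH.exp (basis d)) := by
  constructor <;> try simp only [← cmt_eq_one_iff]
  all_goals
    refine BCH.ext (N34Lie.ext fun i => ?_)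
    simp only [BCH.log_cmt_cmt_left, BCH.log_cmt_cmt_right, BCH.log_inv, BCH.log_one]
    cases i <;> simp [BCH.log_cmt, basis_apply, -lie_lie]

/-- The homomorphism from `N_{3,4}` to the group of its Lie algebra which sends the generators to
the exponentials of the corresponding basis vectors. -/
def ofN34 : N34 →* BCH N34Lie :=
  PresentedGroup.toGroup (f := fun i => BCH.exp (basis (![a, b, c, d] i)))
    ((forall_N34Rels_iff _ (FreeGroup.lift_apply_of ..) (FreeGroup.lift_apply_of ..)
      (FreeGroup.lift_apply_of ..) (FreeGroup.lift_apply_of ..)).2 n34Relations)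

theorem degreeOne_log_ofN34_of (i : Fin 4) :
    degreeOne (ofN34 (PresentedGroup.of i)).log = Pi.single i 1 := by
  rw [ofN34, PresentedGroup.toGroup.of]
  ext l
  fin_cases i <;> fin_cases l <;> simp [degreeOne, basis_apply]

theorem degreeOne_log_ofN34 {u : N34} {e : Fin 4 → ℤ}
    (hu : u * (ga ^ e 0 * gb ^ e 1 * gc ^ e 2 * gd ^ e 3)⁻¹ ∈ commutator N34) :
    degreeOne (ofN34 u).log = fun i => (e i : ℚ) := by
  let ψ : N34 →* Multiplicative (Fin 4 → ℚ) := (BCH.linearPart degreeOne degreeOne_lie).comp ofN34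
  have hψ : ψ u = ψ (ga ^ e 0 * gb ^ e 1 * gc ^ e 2 * gd ^ e 3) := by
    rw [← mul_inv_eq_one, ← map_inv, ← map_mul, ← MonoidHom.mem_ker]
    exact Abelianization.commutator_subset_ker ψ hu
  have hof (i : Fin 4) : ψ (PresentedGroup.of i) = Multiplicative.ofAdd (Pi.single i 1) :=
    congrArg Multiplicative.ofAdd (degreeOne_log_ofN34_of i)
  simp only [map_mul, map_zpow, ga, gb, gc, gd, hof, ← ofAdd_zsmul, ← ofAdd_add] at hψ
  ext i
  rw [show degreeOne (ofN34 u).log = _ from Multiplicative.ofAdd.injective hψ]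
  fin_cases i <;> simp

end N34Lie

/-! ### Rigidity of the relations -/

/-- The relations which `PowerRelations` imposes on the logarithms of elements of a BCH group. -/
structure LiePowerRelations {L : Type*} [LieRing L] [LieAlgebra ℚ L] (A B C D : L)
    (m n k j : ℕ) : Prop where
  ab_eq_acc : (k * k) • (⁅A, B⁆ + (1 / 2 : ℚ) • ⁅⁅A, B⁆, A + B⁆) = n • ⁅⁅A, C⁆, C⁆
  cd_eq_aac : (m * m) • (⁅C, D⁆ + (1 / 2 : ℚ) • ⁅⁅C, D⁆, C + D⁆) = j • ⁅A, ⁅A, C⁆⁆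
  add_eq_zero : ⁅⁅A, D⁆, D⁆ = 0
  bbc_eq_zero : ⁅B, ⁅B, C⁆⁆ = 0
  acc_eq_bdc : (n * j) • ⁅⁅A, C⁆, C⁆ = (m * k) • ⁅⁅B, D⁆, C⁆
  aac_eq_bbd : (n * n * j) • ⁅A, ⁅A, C⁆⁆ = (m * m * k) • ⁅B, ⁅B, D⁆⁆
  aad_eq_bcc : (n * k * k) • ⁅A, ⁅A, D⁆⁆ = (m * m * j) • ⁅⁅B, C⁆, C⁆

theorem PowerRelations.log {L : Type*} [LieRing L] [LieAlgebra ℚ L] [IsThreeStepNilpotent L]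
    {A B C D : BCH L} {m n k j : ℕ} (h : PowerRelations A B C D m n k j) :
    LiePowerRelations A.log B.log C.log D.log m n k j := by
  constructor <;>
    simp only [← BCH.log_cmt, ← BCH.log_cmt_cmt_left, ← BCH.log_cmt_cmt_right, ← BCH.log_pow,
      ← BCH.log_one]
  exacts [congrArg BCH.log h.ab_eq_acc, congrArg BCH.log h.cd_eq_aac,
    congrArg BCH.log h.add_eq_one, congrArg BCH.log h.bbc_eq_one, congrArg BCH.log h.acc_eq_bdc,
    congrArg BCH.log h.aac_eq_bbd, congrArg BCH.log h.aad_eq_bcc]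

section FieldIdentities

theorem det_fin_four {R : Type*} [CommRing R] (M : Matrix (Fin 4) (Fin 4) R) :
    M.det = (M 0 0 * M 1 1 - M 0 1 * M 1 0) * (M 2 2 * M 3 3 - M 2 3 * M 3 2)
      - (M 0 0 * M 1 2 - M 0 2 * M 1 0) * (M 2 1 * M 3 3 - M 2 3 * M 3 1)
      + (M 0 0 * M 1 3 - M 0 3 * M 1 0) * (M 2 1 * M 3 2 - M 2 2 * M 3 1)
      + (M 0 1 * M 1 2 - M 0 2 * M 1 1) * (M 2 0 * M 3 3 - M 2 3 * M 3 0)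
      - (M 0 1 * M 1 3 - M 0 3 * M 1 1) * (M 2 0 * M 3 2 - M 2 2 * M 3 0)
      + (M 0 2 * M 1 3 - M 0 3 * M 1 2) * (M 2 0 * M 3 1 - M 2 1 * M 3 0) := by
  rw [Matrix.det_succ_row_zero]
  simp [Fin.sum_univ_four, Matrix.det_fin_three, Fin.succAbove]
  ring

theorem eq_zero_of_minor_ne_zero {R : Type*} [CommRing R] [NoZeroDivisors R]
    {u u' v v' w w' : R} (h : u * v' - v * u' ≠ 0) (hu : u * w' - w * u' = 0)
    (hv : v * w' - w * v' = 0) : w = 0 ∧ w' = 0 := by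
  have hw : (u * v' - v * u') * w = 0 := by linear_combination v * hu - u * hv
  have hw' : (u * v' - v * u') * w' = 0 := by linear_combination v' * hu - u' * hv
  exact ⟨(mul_eq_zero.1 hw).resolve_left h, (mul_eq_zero.1 hw').resolve_left h⟩

theorem eq_one_of_scaling_relations {R : Type*} [CommRing R] [IsDomain R] {α β γ δ : R}
    (hα : α ≠ 0) (hγ : γ ≠ 0) (h₁ : β = γ ^ 2) (h₂ : α * γ = β * δ)
    (h₃ : α ^ 2 * γ = β ^ 2 * δ) (h₄ : α ^ 2 * δ = β * γ ^ 2) :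
    α = 1 ∧ β = 1 ∧ γ = 1 ∧ δ = 1 := by
  have hαβ : α = β :=
    mul_left_cancel₀ (mul_ne_zero hα hγ) (by linear_combination h₃ - β * h₂)
  subst hαβ
  have hδγ : δ = γ := mul_left_cancel₀ hα h₂.symm
  subst hδγ h₁
  have hδ : δ = 1 := mul_left_cancel₀ (pow_ne_zero 4 hγ) (by linear_combination h₄)
  simp [hδ]

end FieldIdentities

namespace N34Lie

open N34Index

/-- The bracket of `X` and `Y` has no components along the basis vectors `x, y, z, w`. These
components are the minors of the degree-one parts of `X` and `Y` which involve one of the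
coordinates `a, b` and one of the coordinates `c, d`. -/
structure CrossMinorsVanish (X Y : N34Lie) : Prop where
  ac : X a * Y c - X c * Y a = 0
  ad : X a * Y d - X d * Y a = 0
  bc : X b * Y c - X c * Y b = 0
  bd : X b * Y d - X d * Y b = 0

/-- The degree-one parts of `X` and `Y` form a basis of the plane spanned by `a` and `b`. -/
structure SpanAB (X Y : N34Lie) : Prop where
  minor_ne_zero : X a * Y b - X b * Y a ≠ 0
  left_c : X c = 0
  left_d : X d = 0
  right_c : Y c = 0
  right_d : Y d = 0

/-- The degree-one parts of `X` and `Y` form a basis of the plane spanned by `c` and `d`. -/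
structure SpanCD (X Y : N34Lie) : Prop where
  minor_ne_zero : X c * Y d - X d * Y c ≠ 0
  left_a : X a = 0
  left_b : X b = 0
  right_a : Y a = 0
  right_b : Y b = 0

section Minors

variable {A B C D X Y : N34Lie}

theorem CrossMinorsVanish.spanAB (h : CrossMinorsVanish X Y) (hab : X a * Y b - X b * Y a ≠ 0) :
    SpanAB X Y := by
  obtain ⟨hXc, hYc⟩ := eq_zero_of_minor_ne_zero hab h.ac h.bc
  obtain ⟨hXd, hYd⟩ := eq_zero_of_minor_ne_zero hab h.ad h.bd
  exact ⟨hab, hXc, hXd, hYc, hYd⟩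

theorem CrossMinorsVanish.spanCD (h : CrossMinorsVanish X Y) (hcd : X c * Y d - X d * Y c ≠ 0) :
    SpanCD X Y := by
  obtain ⟨hXa, hYa⟩ := eq_zero_of_minor_ne_zero (w := X a) (w' := Y a) hcd
    (by linear_combination -h.ac) (by linear_combination -h.ad)
  obtain ⟨hXb, hYb⟩ := eq_zero_of_minor_ne_zero (w := X b) (w' := Y b) hcd
    (by linear_combination -h.bc) (by linear_combination -h.bd)
  exact ⟨hcd, hXa, hXb, hYa, hYb⟩

theorem det_degreeOne_of_crossMinorsVanish (h : CrossMinorsVanish A B) :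
    (Matrix.of ![degreeOne A, degreeOne B, degreeOne C, degreeOne D]).det =
      (A a * B b - A b * B a) * (C c * D d - C d * D c) +
      (A c * B d - A d * B c) * (C a * D b - C b * D a) := by
  rw [det_fin_four]
  simp [degreeOne, h.ac, h.ad, h.bc, h.bd]

theorem spanAB_and_spanCD_or_spanCD_and_spanAB (hAB : CrossMinorsVanish A B)
    (hCD : CrossMinorsVanish C D)
    (hdet : (Matrix.of ![degreeOne A, degreeOne B, degreeOne C, degreeOne D]).det ≠ 0) :
    SpanAB A B ∧ SpanCD C D ∨ SpanCD A B ∧ SpanAB C D := by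
  rw [det_degreeOne_of_crossMinorsVanish hAB] at hdet
  obtain h | h : (A a * B b - A b * B a) * (C c * D d - C d * D c) ≠ 0 ∨
      (A c * B d - A d * B c) * (C a * D b - C b * D a) ≠ 0 := by
    contrapose! hdet
    rw [hdet.1, hdet.2, add_zero]
  · exact .inl ⟨hAB.spanAB (left_ne_zero_of_mul h), hCD.spanCD (right_ne_zero_of_mul h)⟩
  · exact .inr ⟨hAB.spanCD (left_ne_zero_of_mul h), hCD.spanAB (right_ne_zero_of_mul h)⟩

end Minors

section Rigidity

variable {A B C D : N34Lie} {m n k j : ℕ}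

theorem crossMinorsVanish_ab (h : LiePowerRelations A B C D m n k j) (hk : k ≠ 0) :
    CrossMinorsVanish A B where
  ac := by simpa [hk, -lie_lie] using congrArg (· x) h.ab_eq_acc
  ad := by simpa [hk, -lie_lie] using congrArg (· y) h.ab_eq_acc
  bc := by simpa [hk, -lie_lie] using congrArg (· z) h.ab_eq_acc
  bd := by simpa [hk, -lie_lie] using congrArg (· w) h.ab_eq_acc

theorem crossMinorsVanish_cd (h : LiePowerRelations A B C D m n k j) (hm : m ≠ 0) :
    CrossMinorsVanish C D where
  ac := by simpa [hm, -lie_lie] using congrArg (· x) h.cd_eq_aac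
  ad := by simpa [hm, -lie_lie] using congrArg (· y) h.cd_eq_aac
  bc := by simpa [hm, -lie_lie] using congrArg (· z) h.cd_eq_aac
  bd := by simpa [hm, -lie_lie] using congrArg (· w) h.cd_eq_aac

theorem not_spanAB_cd_of_spanCD_ab (h : LiePowerRelations A B C D m n k j) (hm : m ≠ 0)
    (hk : k ≠ 0) (hAB : SpanCD A B) : ¬ SpanAB C D := by
  intro hCD
  obtain ⟨hAB0, hAa, hAb, hBa, hBb⟩ := hAB
  obtain ⟨hCD0, hCc, hCd, hDc, hDd⟩ := hCD
  have add_t : A d = 0 ∨ D a = 0 := by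
    simpa [hAa, hAb, hDc, hDd, -lie_lie] using congrArg (· t) h.add_eq_zero
  have add_p : A c * D a * D a + A d * D b * D b = 0 := by
    simpa [hAa, hAb, hDc, hDd, -lie_lie] using congrArg (· p) h.add_eq_zero
  have hDa : D a = 0 := by
    by_contra hDa
    have hAd : A d = 0 := add_t.resolve_right hDa
    have hAc : A c = 0 := by simpa [hAd, hDa] using add_p
    exact hAB0 (by rw [hAc, hAd]; ring)
  have hDb : D b ≠ 0 := by intro hDb; exact hCD0 (by rw [hDa, hDb]; ring)
  have hCa : C a ≠ 0 := by intro hCa; exact hCD0 (by rw [hDa, hCa]; ring)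
  have hAd : A d = 0 := by simpa [hDa, hDb] using add_p
  have hBd : B d ≠ 0 := by intro hBd; exact hAB0 (by rw [hAd, hBd]; ring)
  have bbc_q : B d = 0 ∨ C b = 0 := by
    simpa [hBa, hBb, hCc, hCd, -lie_lie] using congrArg (· q) h.bbc_eq_zero
  have hCb : C b = 0 := bbc_q.resolve_left hBd
  have acc_s := congrArg (· s) h.acc_eq_bdc
  simp [hm, hk, hAa, hAb, hAd, hBa, hBb, hCb, hCc, hCd, hDa, hDc, hDd, hCa, hDb, hBd,
    -lie_lie] at acc_s

theorem off_diagonal_eq_zero (h : LiePowerRelations A B C D m n k j) (hAB : SpanAB A B)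
    (hCD : SpanCD C D) : A b = 0 ∧ B a = 0 ∧ C d = 0 ∧ D c = 0 := by
  obtain ⟨hAB0, hAc, hAd, hBc, hBd⟩ := hAB
  obtain ⟨hCD0, hCa, hCb, hDa, hDb⟩ := hCD
  have add_q : A b = 0 ∨ D d = 0 := by
    simpa [hAc, hAd, hDa, hDb, -lie_lie] using congrArg (· q) h.add_eq_zero
  have add_t : A b = 0 ∨ D c = 0 := by
    simpa [hAc, hAd, hDa, hDb, -lie_lie] using congrArg (· t) h.add_eq_zero
  have hAb : A b = 0 := by
    by_contra hAb
    exact hCD0 (by rw [add_q.resolve_left hAb, add_t.resolve_left hAb]; ring)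
  have hAa : A a ≠ 0 := by intro hAa; exact hAB0 (by rw [hAa, hAb]; ring)
  have hBb : B b ≠ 0 := by intro hBb; exact hAB0 (by rw [hBb, hAb]; ring)
  have hDc : D c = 0 := by
    simpa [hAa, hAb, hAc, hAd, hDa, hDb, -lie_lie] using congrArg (· r) h.add_eq_zero
  have hCc : C c ≠ 0 := by intro hCc; exact hCD0 (by rw [hCc, hDc]; ring)
  have hBa : B a = 0 := by
    have bbc_q : -(B b * (B a * C c)) - B a * (B b * C c) = 0 := by
      simpa [hBc, hBd, hCa, hCb, -lie_lie] using congrArg (· q) h.bbc_eq_zero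
    refine mul_left_cancel₀ (mul_ne_zero hBb hCc) ?_
    linear_combination -bbc_q / 2
  have hCd : C d = 0 := by
    simpa [hBa, hBb, hBc, hBd, hCa, hCb, -lie_lie] using congrArg (· p) h.bbc_eq_zero
  exact ⟨hAb, hBa, hCd, hDc⟩

theorem diagonal_eq (h : LiePowerRelations A B C D m n k j) (hm : m ≠ 0) (hn : n ≠ 0)
    (hk : k ≠ 0) (hj : j ≠ 0) (hAB : SpanAB A B) (hCD : SpanCD C D) :
    A a = m ∧ B b = n ∧ C c = k ∧ D d = j := by
  obtain ⟨hAb, hBa, hCd, hDc⟩ := off_diagonal_eq_zero h hAB hCD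
  obtain ⟨hAB0, hAc, hAd, hBc, hBd⟩ := hAB
  obtain ⟨hCD0, hCa, hCb, hDa, hDb⟩ := hCD
  have hAa : A a ≠ 0 := by intro hAa; exact hAB0 (by rw [hAa, hAb]; ring)
  have hCc : C c ≠ 0 := by intro hCc; exact hCD0 (by rw [hCc, hCd]; ring)
  have ab_eq_acc : k * k * (A a * B b) = n * (A a * C c * C c) := by
    simpa [hAb, hAc, hAd, hBa, hBc, hBd, hCa, hCb, hCd, -lie_lie, -mul_eq_mul_left_iff]
      using congrArg (· r) h.ab_eq_acc
  have acc_eq_bdc : n * j * (A a * C c * C c) = m * k * (B b * D d * C c) := by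
    simpa [hAb, hAc, hAd, hBa, hBc, hBd, hCa, hCb, hCd, hDa, hDb, hDc, -lie_lie,
      -mul_eq_mul_right_iff] using congrArg (· r) h.acc_eq_bdc
  have aac_eq_bbd : n * n * j * (A a * (A a * C c)) = m * m * k * (B b * (B b * D d)) := by
    simpa [hAb, hAc, hAd, hBa, hBc, hBd, hCa, hCb, hCd, hDa, hDb, hDc, -lie_lie,
      -mul_eq_mul_left_iff] using congrArg (· p) h.aac_eq_bbd
  have aad_eq_bcc : n * k * k * (A a * (A a * D d)) = m * m * j * (B b * C c * C c) := by
    simpa [hAb, hAc, hAd, hBa, hBc, hBd, hCa, hCb, hCd, hDa, hDb, hDc, -lie_lie,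
      -mul_eq_mul_left_iff] using congrArg (· t) h.aad_eq_bcc
  have hm' : (m : ℚ) ≠ 0 := Nat.cast_ne_zero.2 hm
  have hn' : (n : ℚ) ≠ 0 := Nat.cast_ne_zero.2 hn
  have hk' : (k : ℚ) ≠ 0 := Nat.cast_ne_zero.2 hk
  have hj' : (j : ℚ) ≠ 0 := Nat.cast_ne_zero.2 hj
  obtain ⟨hα, hβ, hγ, hδ⟩ := eq_one_of_scaling_relations (α := A a / m) (β := B b / n)
    (γ := C c / k) (δ := D d / j) (div_ne_zero hAa hm') (div_ne_zero hCc hk')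
    (by field_simp; exact mul_left_cancel₀ hAa (by linear_combination ab_eq_acc))
    (by field_simp; exact mul_left_cancel₀ hCc (by linear_combination acc_eq_bdc))
    (by field_simp; linear_combination aac_eq_bbd)
    (by field_simp; linear_combination aad_eq_bcc)
  exact ⟨(div_eq_one_iff_eq hm').1 hα, (div_eq_one_iff_eq hn').1 hβ,
    (div_eq_one_iff_eq hk').1 hγ, (div_eq_one_iff_eq hj').1 hδ⟩

theorem degreeOne_eq_diagonal (h : LiePowerRelations A B C D m n k j) (hm : m ≠ 0) (hn : n ≠ 0)
    (hk : k ≠ 0) (hj : j ≠ 0)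
    (hdet : (Matrix.of ![degreeOne A, degreeOne B, degreeOne C, degreeOne D]).det ≠ 0) :
    Matrix.of ![degreeOne A, degreeOne B, degreeOne C, degreeOne D] =
      Matrix.diagonal ![(m : ℚ), (n : ℚ), (k : ℚ), (j : ℚ)] := by
  obtain ⟨hAB, hCD⟩ | ⟨hAB, hCD⟩ := spanAB_and_spanCD_or_spanCD_and_spanAB
    (crossMinorsVanish_ab h hk) (crossMinorsVanish_cd h hm) hdet
  · obtain ⟨hAb, hBa, hCd, hDc⟩ := off_diagonal_eq_zero h hAB hCD
    obtain ⟨hAa, hBb, hCc, hDd⟩ := diagonal_eq h hm hn hk hj hAB hCD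
    ext i l
    fin_cases i <;> fin_cases l <;>
      simp [degreeOne, hAa, hAb, hAB.left_c, hAB.left_d, hBa, hBb, hAB.right_c, hAB.right_d,
        hCD.left_a, hCD.left_b, hCc, hCd, hCD.right_a, hCD.right_b, hDc, hDd]
  · exact absurd hCD (not_spanAB_cd_of_spanCD_ab h hm hk hAB)

end Rigidity

end N34Lie

theorem N34.exponents_eq_diagonal {A B C D : N34} {m n k j : ℕ}
    (h : PowerRelations A B C D m n k j) (hm : m ≠ 0) (hn : n ≠ 0) (hk : k ≠ 0) (hj : j ≠ 0)
    {M : Matrix (Fin 4) (Fin 4) ℤ}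
    (hA : A * (ga ^ M 0 0 * gb ^ M 0 1 * gc ^ M 0 2 * gd ^ M 0 3)⁻¹ ∈ commutator N34)
    (hB : B * (ga ^ M 1 0 * gb ^ M 1 1 * gc ^ M 1 2 * gd ^ M 1 3)⁻¹ ∈ commutator N34)
    (hC : C * (ga ^ M 2 0 * gb ^ M 2 1 * gc ^ M 2 2 * gd ^ M 2 3)⁻¹ ∈ commutator N34)
    (hD : D * (ga ^ M 3 0 * gb ^ M 3 1 * gc ^ M 3 2 * gd ^ M 3 3)⁻¹ ∈ commutator N34)
    (hM : M.det ≠ 0) : M = Matrix.diagonal ![(m : ℤ), (n : ℤ), (k : ℤ), (j : ℤ)] := by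
  have hrows : M.map (Int.castRingHom ℚ) = Matrix.of ![
      N34Lie.degreeOne (N34Lie.ofN34 A).log, N34Lie.degreeOne (N34Lie.ofN34 B).log,
      N34Lie.degreeOne (N34Lie.ofN34 C).log, N34Lie.degreeOne (N34Lie.ofN34 D).log] := by
    rw [N34Lie.degreeOne_log_ofN34 hA, N34Lie.degreeOne_log_ofN34 hB,
      N34Lie.degreeOne_log_ofN34 hC, N34Lie.degreeOne_log_ofN34 hD]
    ext i l
    fin_cases i <;> rfl
  have hdet : (M.map (Int.castRingHom ℚ)).det ≠ 0 := by
    rw [← RingHom.mapMatrix_apply, ← RingHom.map_det]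
    exact Int.cast_ne_zero.2 hM
  apply Matrix.map_injective (f := Int.castRingHom ℚ) (RingHom.injective_int _)
  beta_reduce
  rw [hrows, N34Lie.degreeOne_eq_diagonal (h.map N34Lie.ofN34).log hm hn hk hj (hrows ▸ hdet)]
  ext i l
  fin_cases i <;> fin_cases l <;> simp

/-- Let `f : H → N_{3,4}` be a virtual endomorphism of `G = N_{3,4}` and let `Nf` be the
`4 × 4` integer exponent matrix of `f` (recording the images of `aᵐ, bⁿ, cᵏ, dʲ` modulo
`G'`). If `det Nf ≠ 0`, then `f(aᵐ) ≡ aᵐ`, `f(bⁿ) ≡ bⁿ`, `f(cᵏ) ≡ cᵏ`, `f(dʲ) ≡ dʲ`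
modulo `G'`; equivalently, `Nf = diag(m, n, k, j)`. -/
theorem N34_exponent_matrix_diagonal_of_det_ne_zero
    (H : Subgroup N34) (hH : H.FiniteIndex) (f : ↥H →* N34)
    (m n k j : ℕ) (hm : 0 < m) (hn : 0 < n) (hk : 0 < k) (hj : 0 < j)
    (ham : ga ^ m ∈ H) (hbn : gb ^ n ∈ H) (hck : gc ^ k ∈ H) (hdj : gd ^ j ∈ H)
    (Nf : Matrix (Fin 4) (Fin 4) ℤ)
    (hfa : f ⟨ga ^ m, ham⟩ *
      (ga ^ Nf 0 0 * gb ^ Nf 0 1 * gc ^ Nf 0 2 * gd ^ Nf 0 3)⁻¹ ∈ commutator N34)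
    (hfb : f ⟨gb ^ n, hbn⟩ *
      (ga ^ Nf 1 0 * gb ^ Nf 1 1 * gc ^ Nf 1 2 * gd ^ Nf 1 3)⁻¹ ∈ commutator N34)
    (hfc : f ⟨gc ^ k, hck⟩ *
      (ga ^ Nf 2 0 * gb ^ Nf 2 1 * gc ^ Nf 2 2 * gd ^ Nf 2 3)⁻¹ ∈ commutator N34)
    (hfd : f ⟨gd ^ j, hdj⟩ *
      (ga ^ Nf 3 0 * gb ^ Nf 3 1 * gc ^ Nf 3 2 * gd ^ Nf 3 3)⁻¹ ∈ commutator N34)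
    (hdet : Nf.det ≠ 0) :
    (f ⟨ga ^ m, ham⟩ * (ga ^ m)⁻¹ ∈ commutator N34 ∧
      f ⟨gb ^ n, hbn⟩ * (gb ^ n)⁻¹ ∈ commutator N34 ∧
      f ⟨gc ^ k, hck⟩ * (gc ^ k)⁻¹ ∈ commutator N34 ∧
      f ⟨gd ^ j, hdj⟩ * (gd ^ j)⁻¹ ∈ commutator N34) ∧
    Nf = Matrix.diagonal ![(m : ℤ), (n : ℤ), (k : ℤ), (j : ℤ)] := by
  have hpow : PowerRelations (⟨ga ^ m, ham⟩ : H) ⟨gb ^ n, hbn⟩ ⟨gc ^ k, hck⟩ ⟨gd ^ j, hdj⟩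
      m n k j := .of_map H.subtype_injective (N34.powerRelations m n k j)
  have hN : Nf = Matrix.diagonal ![(m : ℤ), (n : ℤ), (k : ℤ), (j : ℤ)] :=
    N34.exponents_eq_diagonal (hpow.map f) hm.ne' hn.ne' hk.ne' hj.ne' hfa hfb hfc hfd hdet
  rw [hN] at hfa hfb hfc hfd
  exact ⟨⟨by simpa using hfa, by simpa using hfb, by simpa using hfc, by simpa using hfd⟩, hN⟩
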